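/- arXiv:2602.21561 — 5 statements merged into one kernel-verified Lean document; each statement's English description precedes it below -/
import Mathlib

section
/- The function W̄ is differentiable on ℝ with W̄'(y) = −1/(1 + 3·W̄(y)²) for every y. In particular, −1 ≤ W̄'(y) ≤ 0 for all y, and W̄'(y) = −1 if and only if y = 0. -/
/-- The stable self-similar Burgers profile `W̄`. -/
noncomputable def Wbar (y : ℝ) : ℝ :=
  (-y / 2 + Real.sqrt (1 / 27 + y ^ 2 / 4)) ^ ((1 : ℝ) / 3) -
  (y / 2 + Real.sqrt (1 / 27 + y ^ 2 / 4)) ^ ((1 : ℝ) / 3)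

lemma Wbar_aux_pos (y : ℝ) : |y / 2| < Real.sqrt (1 / 27 + y ^ 2 / 4) := by
  apply Real.lt_sqrt_of_sq_lt
  rw [sq_abs]
  nlinarith

lemma Wbar_cubic (y : ℝ) : Wbar y + Wbar y ^ 3 = -y := by
  have h := abs_lt.1 (Wbar_aux_pos y)
  have hs : Real.sqrt (1 / 27 + y ^ 2 / 4) ^ 2 = 1 / 27 + y ^ 2 / 4 :=
    Real.sq_sqrt (by positivity)
  unfold Wbar
  set s := Real.sqrt (1 / 27 + y ^ 2 / 4)
  have hp : 0 < -y / 2 + s := by linarith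
  have hq : 0 < y / 2 + s := by linarith
  have ha : ((-y / 2 + s) ^ ((1 : ℝ) / 3)) ^ 3 = -y / 2 + s := by
    rw [← Real.rpow_natCast, ← Real.rpow_mul hp.le]; norm_num
  have hb : ((y / 2 + s) ^ ((1 : ℝ) / 3)) ^ 3 = y / 2 + s := by
    rw [← Real.rpow_natCast, ← Real.rpow_mul hq.le]; norm_num
  have hab : (-y / 2 + s) ^ ((1 : ℝ) / 3) * (y / 2 + s) ^ ((1 : ℝ) / 3) = 1 / 3 := by
    rw [← Real.mul_rpow hp.le hq.le]
    have : (-y / 2 + s) * (y / 2 + s) = (1 / 3) ^ (3 : ℝ) := by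
      norm_num
      linarith
    rw [this, ← Real.rpow_mul (by norm_num)]
    norm_num
  generalize (-y / 2 + s) ^ ((1 : ℝ) / 3) = a at *
  generalize (y / 2 + s) ^ ((1 : ℝ) / 3) = b at *
  linear_combination ha - hb - 3 * (a - b) * hab

lemma Wbar_differentiable : Differentiable ℝ Wbar := by
  intro y
  have h := abs_lt.1 (Wbar_aux_pos y)
  have h0 : (1 / 27 + y ^ 2 / 4 : ℝ) ≠ 0 := by positivity
  have hs : DifferentiableAt ℝ (fun y : ℝ => Real.sqrt (1 / 27 + y ^ 2 / 4)) y :=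
    DifferentiableAt.sqrt (by fun_prop) h0
  unfold Wbar
  apply DifferentiableAt.sub
  · apply DifferentiableAt.rpow_const
    · exact DifferentiableAt.add (by fun_prop) hs
    · left; linarith
  · apply DifferentiableAt.rpow_const
    · exact DifferentiableAt.add (by fun_prop) hs
    · left; linarith

lemma Wbar_deriv_eq (y : ℝ) : deriv Wbar y = -1 / (1 + 3 * Wbar y ^ 2) := by
  have hd := (Wbar_differentiable y).hasDerivAt
  have h1 := hd.add (hd.pow 3)
  have h2 : HasDerivAt (Wbar + Wbar ^ 3) (-1) y := by
    have : Wbar + Wbar ^ 3 = fun y => -y := funext Wbar_cubic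
    rw [this]
    exact hasDerivAt_neg y
  have h3 := h1.unique h2
  rw [eq_div_iff (by positivity)]
  norm_num at h3
  linear_combination h3

/-- `W̄` is differentiable with `W̄'(y) = −1/(1 + 3 W̄(y)²)`; in particular `−1 ≤ W̄' ≤ 0` and
`W̄'(y) = −1` iff `y = 0`. -/
theorem Wbar_deriv :
    Differentiable ℝ Wbar ∧
    (∀ y : ℝ, deriv Wbar y = -1 / (1 + 3 * Wbar y ^ 2)) ∧
    (∀ y : ℝ, -1 ≤ deriv Wbar y ∧ deriv Wbar y ≤ 0) ∧
    (∀ y : ℝ, deriv Wbar y = -1 ↔ y = 0) := by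
  refine ⟨Wbar_differentiable, Wbar_deriv_eq, fun y => ?_, fun y => ?_⟩
  · rw [Wbar_deriv_eq]
    have hp : 0 < 1 + 3 * Wbar y ^ 2 := by positivity
    constructor
    · rw [le_div_iff₀ hp]
      nlinarith [sq_nonneg (Wbar y)]
    · exact div_nonpos_of_nonpos_of_nonneg (by norm_num) hp.le
  · rw [Wbar_deriv_eq, div_eq_iff (by positivity)]
    have hc := Wbar_cubic y
    constructor
    · intro h
      have : Wbar y = 0 := by
        have : Wbar y ^ 2 = 0 := by linarith
        exact pow_eq_zero_iff (two_ne_zero) |>.1 this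
      rw [this] at hc
      linarith
    · rintro rfl
      have : Wbar 0 = 0 := by simp [Wbar]
      rw [this]; norm_num
end

section
/- For every integer k ≥ 3 there exists a constant C_k > 0 such that for all real y, the k-th iterated derivative of W̄ satisfies |W̄^{(k)}(y)| ≤ C_k · ⟨y⟩^{1/3 − k}. -/
lemma Wbar_pos (y : ℝ) : 0 < -y / 2 + Real.sqrt (1 / 27 + y ^ 2 / 4) ∧
    0 < y / 2 + Real.sqrt (1 / 27 + y ^ 2 / 4) := by
  have h : |y / 2| < Real.sqrt (1 / 27 + y ^ 2 / 4) := by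
    apply Real.lt_sqrt_of_sq_lt
    rw [sq_abs]
    nlinarith
  have h2 := abs_lt.mp h
  constructor <;> linarith [h2.1, h2.2]

lemma Wbar_hasDerivAt (y : ℝ) : HasDerivAt Wbar (-1 / (1 + 3 * Wbar y ^ 2)) y := by
  have h := (Wbar_differentiable y).hasDerivAt
  have h2 := h.add (h.pow 3)
  have h3 : HasDerivAt (Wbar + Wbar ^ 3) (-1) y := by
    have : Wbar + Wbar ^ 3 = fun y => -y := by
      funext z; exact Wbar_cubic z
    rw [this]; exact (hasDerivAt_id y).neg
  have h4 := h2.unique h3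
  have hp : (0 : ℝ) < 1 + 3 * Wbar y ^ 2 := by positivity
  have : deriv Wbar y = -1 / (1 + 3 * Wbar y ^ 2) := by
    rw [eq_div_iff hp.ne']
    norm_num at h4
    linarith
  rwa [this] at h

open Polynomial in
lemma Wbar_iter (k : ℕ) : ∃ P : ℝ[X], P.natDegree ≤ k ∧
    ∀ y, iteratedDeriv (k + 1) Wbar y = P.eval (Wbar y) / (1 + 3 * Wbar y ^ 2) ^ (2 * k + 1) := by
  induction k with
  | zero =>
    refine ⟨C (-1), by simp, fun y => ?_⟩
    simp only [zero_add, iteratedDeriv_one, eval_C, mul_zero, pow_one]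
    exact (Wbar_hasDerivAt y).deriv
  | succ k ih =>
    obtain ⟨P, hP, h⟩ := ih
    by_cases hk : k = 0
    · subst hk
      obtain ⟨c, rfl⟩ : ∃ c, P = C c := ⟨_, eq_C_of_natDegree_le_zero hP⟩
      refine ⟨C (6 * c) * X, by compute_degree, fun y => ?_⟩
      rw [iteratedDeriv_succ, funext h]
      have hp : (1 + 3 * Wbar y ^ 2) ≠ 0 := by positivity
      have hW := Wbar_hasDerivAt y
      have hD := ((hW.pow 2).const_mul 3).const_add 1
      have := ((hasDerivAt_const y c).div (hD.pow (2 * 0 + 1)) (pow_ne_zero _ hp)).deriv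
      simp only [eval_C]
      refine this.trans ?_
      simp
      field_simp
      ring
    · refine ⟨-(derivative P * (1 + C 3 * X ^ 2)) + C (6 * (2 * k + 1) : ℝ) * X * P, ?_, fun y => ?_⟩
      · have h1 : (derivative P).natDegree ≤ k - 1 := (natDegree_derivative_le P).trans (by omega)
        have h2 : (1 + C 3 * X ^ 2 : ℝ[X]).natDegree ≤ 2 := by compute_degree
        refine (natDegree_add_le_of_degree_le (n := k + 1) ?_ ?_)
        · rw [natDegree_neg]
          exact natDegree_mul_le.trans (by omega)
        · have : (C (6 * (2 * k + 1) : ℝ) * X).natDegree ≤ 1 := by compute_degree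
          exact natDegree_mul_le.trans (by omega)
      · rw [iteratedDeriv_succ, funext h]
        have hp : (1 + 3 * Wbar y ^ 2) ≠ 0 := by positivity
        have hW := Wbar_hasDerivAt y
        have hD := ((hW.pow 2).const_mul 3).const_add 1
        have hPW := (P.hasDerivAt (Wbar y)).comp y hW
        have := (hPW.div (hD.pow (2 * k + 1)) (pow_ne_zero _ hp)).deriv
        refine this.trans ?_
        simp
        field_simp
        ring

open Polynomial in
lemma poly_bound (P : ℝ[X]) (k : ℕ) (hP : P.natDegree ≤ k) : ∃ C : ℝ, 0 < C ∧
    ∀ w s : ℝ, |w| ≤ s → 1 ≤ s → |P.eval w| ≤ C * s ^ k := by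
  refine ⟨(∑ i ∈ Finset.range (k + 1), |P.coeff i|) + 1, by positivity, fun w s hw hs => ?_⟩
  rw [eval_eq_sum_range' (Nat.lt_succ_of_le hP)]
  have h1 : |∑ i ∈ Finset.range (k + 1), P.coeff i * w ^ i|
      ≤ ∑ i ∈ Finset.range (k + 1), |P.coeff i| * s ^ k := by
    refine (Finset.abs_sum_le_sum_abs _ _).trans (Finset.sum_le_sum fun i hi => ?_)
    rw [abs_mul, abs_pow]
    have hi' : i ≤ k := Nat.lt_succ_iff.mp (Finset.mem_range.mp hi)
    have : |w| ^ i ≤ s ^ k := (pow_le_pow_left₀ (abs_nonneg _) hw i).trans (pow_le_pow_right₀ hs hi')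
    gcongr
  rw [← Finset.sum_mul] at h1
  have : 0 ≤ s ^ k := by positivity
  linarith

/-- For every integer `k ≥ 3` there is a constant `C_k > 0` with
`|W̄^{(k)}(y)| ≤ C_k ⟨y⟩^{1/3 − k}` for all real `y`, where `⟨y⟩ = (1 + y²)^{1/2}`. -/
theorem Wbar_higher_deriv_decay (k : ℕ) (hk : 3 ≤ k) :
    ∃ C : ℝ, 0 < C ∧
      ∀ y : ℝ, |iteratedDeriv k Wbar y| ≤ C * Real.sqrt (1 + y ^ 2) ^ ((1 : ℝ) / 3 - k) := by
  obtain ⟨m, rfl⟩ : ∃ m, k = m + 1 := ⟨k - 1, by omega⟩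
  obtain ⟨P, hP, h⟩ := Wbar_iter m
  obtain ⟨C, hC, hb⟩ := poly_bound P m hP
  refine ⟨C, hC, fun y => ?_⟩
  have hc := Wbar_cubic y
  rw [h y]
  set w := Wbar y
  set s := Real.sqrt (1 + 3 * w ^ 2) with hs
  have hs2 : s ^ 2 = 1 + 3 * w ^ 2 := Real.sq_sqrt (by positivity)
  have hs1 : 1 ≤ s := Real.one_le_sqrt.mpr (by nlinarith [sq_nonneg w])
  have hs0 : 0 < s := by linarith
  have hw : |w| ≤ s := Real.abs_le_sqrt (by nlinarith [sq_nonneg w])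
  have hy : Real.sqrt (1 + y ^ 2) ≤ s ^ 3 := by
    apply Real.sqrt_le_iff.mpr ⟨by positivity, ?_⟩
    have e : (s ^ 3) ^ 2 = (1 + 3 * w ^ 2) ^ 3 := by rw [← hs2]; ring
    have e2 : y = -(w + w ^ 3) := by linarith
    rw [e, e2]
    have : (1 + 3 * w ^ 2) ^ 3 - (1 + (-(w + w ^ 3)) ^ 2) = 8 * w ^ 2 + 25 * w ^ 4 + 26 * w ^ 6 := by
      ring
    have : 0 ≤ 8 * w ^ 2 + 25 * w ^ 4 + 26 * w ^ 6 := by positivity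
    linarith
  have hy0 : 0 < Real.sqrt (1 + y ^ 2) := by positivity
  have hexp : ((1 : ℝ) / 3 - ((m + 1 : ℕ) : ℝ)) ≤ 0 := by
    push_cast
    have : (0 : ℝ) ≤ m := by positivity
    linarith
  have key := Real.rpow_le_rpow_of_nonpos hy0 hy hexp
  have e3 : (s ^ 3) ^ ((1 : ℝ) / 3 - ((m + 1 : ℕ) : ℝ)) = s ^ m / (s ^ 2) ^ (2 * m + 1) := by
    rw [← pow_mul, ← Real.rpow_natCast s 3, ← Real.rpow_natCast s m, ← Real.rpow_natCast s (2 * _),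
      ← Real.rpow_mul hs0.le, ← Real.rpow_sub hs0]
    congr 1
    push_cast
    ring
  rw [← hs2, abs_div, abs_of_pos (by positivity : 0 < (s ^ 2) ^ (2 * m + 1))]
  calc |P.eval w| / (s ^ 2) ^ (2 * m + 1) ≤ C * s ^ m / (s ^ 2) ^ (2 * m + 1) := by
        gcongr
        exact hb w s hw hs1
    _ = C * (s ^ 3) ^ ((1 : ℝ) / 3 - ((m + 1 : ℕ) : ℝ)) := by rw [e3]; ring
    _ ≤ _ := by gcongr
end

section
/- For every real number y with |y| ≥ 100, the derivative of W̄ satisfies the sharper two-sided bound (1/4)·⟨y⟩^{−2/3} ≤ |W̄'(y)| ≤ (7/20)·⟨y⟩^{−2/3}. -/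
theorem Wbar_hasDerivAt_aux (y S p q : ℝ) (hS : S = Real.sqrt (1 / 27 + y ^ 2 / 4))
    (hp : p = (-y / 2 + S) ^ ((1 : ℝ) / 3)) (hq : q = (y / 2 + S) ^ ((1 : ℝ) / 3))
    (hS0 : 0 < S) (ha : 0 < -y / 2 + S) (hb : 0 < y / 2 + S) :
    HasDerivAt Wbar (-(p + q) / (6 * S)) y := by
  have h1 : HasDerivAt (fun x : ℝ => 1 / 27 + x ^ 2 / 4) (y / 2) y := by
    have := ((hasDerivAt_pow 2 y).div_const 4).const_add (1 / 27 : ℝ)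
    exact this.congr_deriv (by norm_num; ring)
  have hne : (1 / 27 + y ^ 2 / 4 : ℝ) ≠ 0 := by positivity
  have h2 := h1.sqrt hne
  rw [← hS] at h2
  have h3 : HasDerivAt (fun x : ℝ => -x / 2 + Real.sqrt (1 / 27 + x ^ 2 / 4))
      (-1 / 2 + y / 2 / (2 * S)) y := ((hasDerivAt_id y).neg.div_const 2).add h2
  have h4 : HasDerivAt (fun x : ℝ => x / 2 + Real.sqrt (1 / 27 + x ^ 2 / 4))
      (1 / 2 + y / 2 / (2 * S)) y := ((hasDerivAt_id y).div_const 2).add h2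
  have h5 := h3.rpow_const (p := (1 : ℝ) / 3) (Or.inl (by rw [← hS]; exact ha.ne'))
  have h6 := h4.rpow_const (p := (1 : ℝ) / 3) (Or.inl (by rw [← hS]; exact hb.ne'))
  rw [← hS, Real.rpow_sub_one ha.ne', ← hp] at h5
  rw [← hS, Real.rpow_sub_one hb.ne', ← hq] at h6
  have h7 := h5.sub h6
  have e1 : (-1 / 2 + y / 2 / (2 * S)) = -(-y / 2 + S) / (2 * S) := by field_simp; ring
  have e2 : (1 / 2 + y / 2 / (2 * S)) = (y / 2 + S) / (2 * S) := by field_simp; ring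
  rw [e1, e2] at h7
  generalize -y / 2 + S = a at *
  generalize y / 2 + S = b at *
  have e3 : -(p + q) / (6 * S) =
      -a / (2 * S) * (1 / 3) * (p / a) - b / (2 * S) * (1 / 3) * (q / b) := by
    have := ha.ne'
    have := hb.ne'
    field_simp
    ring
  rw [e3]
  exact h7

/-- Sharper two-sided bound on `W̄'` for `|y| ≥ 100`:
`(1/4) ⟨y⟩^{−2/3} ≤ |W̄'(y)| ≤ (7/20) ⟨y⟩^{−2/3}`. -/
theorem Wbar_deriv_sharp_bound (y : ℝ) (hy : 100 ≤ |y|) :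
    (1 / 4) * Real.sqrt (1 + y ^ 2) ^ (-(2 : ℝ) / 3) ≤ |deriv Wbar y| ∧
    |deriv Wbar y| ≤ (7 / 20) * Real.sqrt (1 + y ^ 2) ^ (-(2 : ℝ) / 3) := by
  set S := Real.sqrt (1 / 27 + y ^ 2 / 4) with hS
  have hS2 : S ^ 2 = 1 / 27 + y ^ 2 / 4 := Real.sq_sqrt (by positivity)
  have hS0 : 0 < S := Real.sqrt_pos.mpr (by positivity)
  have ha : 0 < -y / 2 + S := by
    have : y / 2 < S := lt_of_pow_lt_pow_left₀ 2 hS0.le (by rw [hS2]; linarith [div_pow y 2 2])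
    linarith
  have hb : 0 < y / 2 + S := by
    have : -y / 2 < S := lt_of_pow_lt_pow_left₀ 2 hS0.le (by rw [hS2]; nlinarith)
    linarith
  obtain ⟨p, hp⟩ : ∃ p, p = (-y / 2 + S) ^ ((1 : ℝ) / 3) := ⟨_, rfl⟩
  obtain ⟨q, hq⟩ : ∃ q, q = (y / 2 + S) ^ ((1 : ℝ) / 3) := ⟨_, rfl⟩
  rw [(Wbar_hasDerivAt_aux y S p q hS hp hq hS0 ha hb).deriv]
  have hp0 : 0 < p := hp ▸ Real.rpow_pos_of_pos ha _
  have hq0 : 0 < q := hq ▸ Real.rpow_pos_of_pos hb _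
  have hp3 : p ^ 3 = -y / 2 + S := by
    rw [hp, ← Real.rpow_natCast, ← Real.rpow_mul ha.le]; norm_num
  have hq3 : q ^ 3 = y / 2 + S := by
    rw [hq, ← Real.rpow_natCast, ← Real.rpow_mul hb.le]; norm_num
  have hpq : p * q = 1 / 3 := by
    have : (p * q) ^ 3 = (1 / 3) ^ 3 := by
      rw [mul_pow, hp3, hq3]; linarith [hS2]
    exact (pow_left_inj₀ (by positivity) (by norm_num) (by norm_num)).mp this
  obtain ⟨m, hm⟩ : ∃ m, m = p ^ 2 + q ^ 2 := ⟨_, rfl⟩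
  have hm0 : 0 < m := by rw [hm]; positivity
  have hm3 : m ^ 3 = y ^ 2 + 2 / 27 + m / 3 := by
    have e : m ^ 3 = (q ^ 3 - p ^ 3) ^ 2 + 2 * (p * q) ^ 3 + 3 * (p * q) ^ 2 * m := by
      rw [hm]; ring
    rw [e, hpq, hp3, hq3]; ring
  have hy2 : 10000 ≤ y ^ 2 := by
    rw [← sq_abs]; nlinarith
  have hm1 : 1 ≤ m := by
    by_contra h
    push Not at h
    have : m ^ 3 ≤ 1 := pow_le_one₀ hm0.le h.le
    linarith
  have habs : |-(p + q) / (6 * S)| = 1 / (3 * m - 1) := by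
    rw [neg_div, abs_neg, abs_of_pos (by positivity)]
    have h2S : 6 * S = 3 * (p ^ 3 + q ^ 3) := by rw [hp3, hq3]; ring
    have : 3 * (p ^ 3 + q ^ 3) = (p + q) * (3 * m - 1) := by
      rw [hm]; linear_combination (-3 * (p + q)) * hpq
    rw [h2S, this]
    have : 0 < p + q := by positivity
    have : 0 < 3 * m - 1 := by linarith
    field_simp
  obtain ⟨T, hT⟩ : ∃ T, T = Real.sqrt (1 + y ^ 2) ^ ((2 : ℝ) / 3) := ⟨_, rfl⟩
  have hJ : 0 < Real.sqrt (1 + y ^ 2) := Real.sqrt_pos.mpr (by positivity)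
  have hT0 : 0 < T := hT ▸ Real.rpow_pos_of_pos hJ _
  have hT3 : T ^ 3 = 1 + y ^ 2 := by
    rw [hT, ← Real.rpow_natCast, ← Real.rpow_mul hJ.le]
    norm_num
    exact Real.sq_sqrt (by positivity)
  have hTi : Real.sqrt (1 + y ^ 2) ^ (-(2 : ℝ) / 3) = 1 / T := by
    rw [neg_div, Real.rpow_neg hJ.le, ← hT, one_div]
  rw [habs, hTi]
  have hT21 : 21 ≤ T := by
    by_contra h
    push Not at h
    have : T ^ 3 ≤ 21 ^ 3 := pow_le_pow_left₀ hT0.le h.le 3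
    linarith
  have hD : 0 < 3 * m - 1 := by linarith
  have hup : 3 * m - 1 ≤ 4 * T := by
    by_contra h
    push Not at h
    have h1 : 4 / 3 * T ≤ m := by linarith
    have h2 : T ^ 2 * (4 / 3) ^ 2 ≤ m ^ 2 := by
      have := pow_le_pow_left₀ (by positivity) h1 2
      linarith [mul_pow (4 / 3) T 2]
    have h3 : m * (T ^ 2 * (4 / 3) ^ 2 - 1 / 3) ≤ T ^ 3 := by
      have := mul_le_mul_of_nonneg_left h2 hm0.le
      linarith
    have h6 : 441 ≤ T ^ 2 := by
      have := pow_le_pow_left₀ (by norm_num) hT21 2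
      linarith
    have h4 : 0 ≤ T ^ 2 * (4 / 3) ^ 2 - 1 / 3 := by linarith
    have h5 := mul_le_mul_of_nonneg_right h1 h4
    have h7 := mul_le_mul_of_nonneg_right h6 hT0.le
    linarith
  have hlo : 20 / 7 * T ≤ 3 * m - 1 := by
    by_contra h
    push Not at h
    have h1 : m ≤ 20 / 21 * T + 1 / 3 := by linarith
    have h2 := pow_le_pow_left₀ hm0.le h1 3
    have h3 : 21 * T ^ 2 ≤ T ^ 3 := by
      have := mul_le_mul_of_nonneg_right hT21 (sq_nonneg T)
      linarith
    have h4 := mul_le_mul_of_nonneg_right hT21 hT0.le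
    linarith
  constructor
  · rw [div_mul_div_comm, div_le_div_iff₀ (by positivity) hD]; linarith
  · rw [div_mul_div_comm, div_le_div_iff₀ hD (by positivity)]; linarith
end

section
/- Let β* ∈ ℝ, b : ℝ → ℝ differentiable, I ⊆ ℝ an open interval, and w, z : ℝ × I → ℝ differentiable functions satisfying ∂ₜw + (w + (1/3)z)·∂ₓw = −(3/4)β*·b'(x) and ∂ₜz + ((1/3)w + z)·∂ₓz = −(3/4)β*·b'(x) on ℝ × I. Let τ, ξ, κ : I → ℝ be differentiable with τ(t) > t and τ'(t) < 1 for all t ∈ I, and set β_τ(t) = 1/(1 − τ'(t)). Then s(t) = −log(τ(t) − t) is strictly increasing on I; let t(·) be its inverse defined on J = s(I). Define W, Z, B : ℝ × J → ℝ by W(y, s) = e^{s/2}·(w(ξ(t(s)) + y·e^{−3s/2}, t(s)) − κ(t(s))), Z(y, s) = z(ξ(t(s)) + y·e^{−3s/2}, t(s)), and B(y, s) = b'(ξ(t(s)) + y·e^{−3s/2}). Then on ℝ × J the self-similar equations hold: ∂ₛW − (1/2)W + ((3/2)y + β_τ·W + G_W)·∂_yW = −(3/4)β*·β_τ·e^{−s/2}·B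 − e^{−s/2}·β_τ·κ'(t(s)), where G_W(y, s) = e^{s/2}·β_τ·(κ(t(s)) + (1/3)Z(y, s) − ξ'(t(s))), and ∂ₛZ + ((3/2)y + (1/3)β_τ·W + G_Z)·∂_yZ = −(3/4)β*·β_τ·e^{−s}·B, where G_Z(y, s) = e^{s/2}·β_τ·((1/3)κ(t(s)) + Z(y, s) − ξ'(t(s))), with β_τ evaluated at t(s). -/
open Filter Topology

/-- Local differentiable inverse of a strictly increasing function. -/
lemma local_inverse_aux (I : Set ℝ) (hI : IsOpen I) (σ : ℝ → ℝ) (hm : StrictMonoOn σ I)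
    (t σ' : ℝ) (ht : t ∈ I) (hc : ContinuousOn σ I) (hd : HasDerivAt σ σ' t) (h0 : σ' ≠ 0) :
    ∃ g : ℝ → ℝ, g (σ t) = t ∧ HasDerivAt g σ'⁻¹ (σ t) ∧
      ∀ᶠ s in 𝓝 (σ t), g s ∈ I ∧ σ (g s) = s := by
  have hinv : ∀ u ∈ I, Function.invFunOn σ I (σ u) = u := fun u hu =>
    hm.injOn.leftInvOn_invFunOn hu
  have key : ∀ U ∈ 𝓝 t, ∀ᶠ s in 𝓝 (σ t), ∃ u ∈ U ∩ I, σ u = s := by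
    intro U hU
    obtain ⟨ε, hε, hsub⟩ := (nhds_basis_Icc_pos t).mem_iff.1 (inter_mem hU (hI.mem_nhds ht))
    have h1 : t - ε ∈ I := (hsub ⟨le_refl _, by linarith⟩).2
    have h2 : t + ε ∈ I := (hsub ⟨by linarith, le_refl _⟩).2
    have l1 : σ (t - ε) < σ t := hm h1 ht (by linarith)
    have l2 : σ t < σ (t + ε) := hm ht h2 (by linarith)
    filter_upwards [Icc_mem_nhds l1 l2] with s hs
    obtain ⟨u, hu, rfl⟩ := intermediate_value_Icc (by linarith : t - ε ≤ t + ε)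
      (hc.mono fun x hx => (hsub hx).2) hs
    exact ⟨u, hsub hu, rfl⟩
  have hev : ∀ᶠ s in 𝓝 (σ t), Function.invFunOn σ I s ∈ I ∧ σ (Function.invFunOn σ I s) = s := by
    filter_upwards [key Set.univ univ_mem] with s hs
    obtain ⟨u, hu, rfl⟩ := hs
    rw [hinv u hu.2]
    exact ⟨hu.2, rfl⟩
  refine ⟨Function.invFunOn σ I, hinv t ht, ?_, hev⟩
  have hcont : ContinuousAt (Function.invFunOn σ I) (σ t) := by
    unfold ContinuousAt
    rw [hinv t ht]
    intro U hU
    rw [mem_map]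
    filter_upwards [key U hU] with s hs
    obtain ⟨u, hu, rfl⟩ := hs
    simp only [Set.mem_preimage]
    rw [hinv u hu.2]
    exact hu.1
  refine HasDerivAt.of_local_left_inverse hcont ?_ h0 (hev.mono fun s hs => hs.2)
  rw [hinv t ht]
  exact hd

/-- Chain rule along a curve in the plane, in terms of the partial derivatives. -/
lemma chain_aux (f : ℝ × ℝ → ℝ) (p q : ℝ → ℝ) (p' q' s x t : ℝ)
    (hx : p s = x) (ht : q s = t)
    (hf : DifferentiableAt ℝ f (x, t)) (hp : HasDerivAt p p' s) (hq : HasDerivAt q q' s) :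
    HasDerivAt (fun r => f (p r, q r))
      (deriv (fun x' => f (x', t)) x * p' + deriv (fun t' => f (x, t')) t * q') s := by
  subst hx ht
  have hF := hf.hasFDerivAt
  have h1 : HasDerivAt (fun x' => f (x', q s)) (fderiv ℝ f (p s, q s) (1, 0)) (p s) :=
    HasFDerivAt.comp_hasDerivAt (f := fun x' => (x', q s)) (p s) hF
      ((hasDerivAt_id (p s)).prodMk (hasDerivAt_const (p s) (q s)))
  have h2 : HasDerivAt (fun t' => f (p s, t')) (fderiv ℝ f (p s, q s) (0, 1)) (q s) :=
    HasFDerivAt.comp_hasDerivAt (f := fun t' => (p s, t')) (q s) hF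
      ((hasDerivAt_const (q s) (p s)).prodMk (hasDerivAt_id (q s)))
  have h3 : HasDerivAt (fun r => f (p r, q r)) (fderiv ℝ f (p s, q s) (p', q')) s :=
    HasFDerivAt.comp_hasDerivAt (f := fun r => (p r, q r)) s hF (hp.prodMk hq)
  rw [h1.deriv, h2.deriv]
  convert h3 using 1
  have : ((p', q') : ℝ × ℝ) = p' • (1, 0) + q' • (0, 1) := by simp
  rw [this, map_add, map_smul, map_smul]
  simp [mul_comm]


/-- Passage to self-similar variables for the diagonalized shallow water system.
With `s(t) = −log(τ(t) − t)`, `y = (x − ξ(t)) e^{3s/2}`, and the ansatz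
`w(x,t) = e^{−s/2} W(y,s) + κ(t)`, `z(x,t) = Z(y,s)`, `b'(x) = B(y,s)`,
the Riemann-invariant system transforms into the self-similar `(W, Z)` system. -/
theorem selfSimilar_transformation (βstar : ℝ) (b : ℝ → ℝ) (hb : Differentiable ℝ b)
    (I : Set ℝ) (hIopen : IsOpen I) (hIconn : I.OrdConnected)
    (w z : ℝ × ℝ → ℝ)
    (hwdiff : ∀ x : ℝ, ∀ t ∈ I, DifferentiableAt ℝ w (x, t))
    (hzdiff : ∀ x : ℝ, ∀ t ∈ I, DifferentiableAt ℝ z (x, t))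
    (hweq : ∀ x : ℝ, ∀ t ∈ I,
      deriv (fun t' => w (x, t')) t +
        (w (x, t) + (1 / 3) * z (x, t)) * deriv (fun x' => w (x', t)) x =
        -(3 / 4) * βstar * deriv b x)
    (hzeq : ∀ x : ℝ, ∀ t ∈ I,
      deriv (fun t' => z (x, t')) t +
        ((1 / 3) * w (x, t) + z (x, t)) * deriv (fun x' => z (x', t)) x =
        -(3 / 4) * βstar * deriv b x)
    (τ ξ κ : ℝ → ℝ)
    (hτdiff : ∀ t ∈ I, DifferentiableAt ℝ τ t)
    (hξdiff : ∀ t ∈ I, DifferentiableAt ℝ ξ t)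
    (hκdiff : ∀ t ∈ I, DifferentiableAt ℝ κ t)
    (hτgt : ∀ t ∈ I, t < τ t)
    (hτ' : ∀ t ∈ I, deriv τ t < 1)
    (W Z B : ℝ → ℝ → ℝ)
    (hW : ∀ y : ℝ, ∀ t ∈ I,
      W y (-Real.log (τ t - t)) =
        Real.exp (-Real.log (τ t - t) / 2) *
          (w (ξ t + y * Real.exp (-(3 * (-Real.log (τ t - t))) / 2), t) - κ t))
    (hZ : ∀ y : ℝ, ∀ t ∈ I,
      Z y (-Real.log (τ t - t)) =
        z (ξ t + y * Real.exp (-(3 * (-Real.log (τ t - t))) / 2), t))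
    (hB : ∀ y : ℝ, ∀ t ∈ I,
      B y (-Real.log (τ t - t)) =
        deriv b (ξ t + y * Real.exp (-(3 * (-Real.log (τ t - t))) / 2))) :
    -- `s(t) = −log(τ(t) − t)` is strictly increasing on `I`
    StrictMonoOn (fun t => -Real.log (τ t - t)) I ∧
    -- the self-similar equations for `W` and `Z`
    (∀ y : ℝ, ∀ t ∈ I,
      let s := -Real.log (τ t - t)
      let βτ := 1 / (1 - deriv τ t)
      let GW := Real.exp (s / 2) * βτ * (κ t + (1 / 3) * Z y s - deriv ξ t)
      let GZ := Real.exp (s / 2) * βτ * ((1 / 3) * κ t + Z y s - deriv ξ t)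
      (deriv (fun s' => W y s') s - (1 / 2) * W y s +
          ((3 / 2) * y + βτ * W y s + GW) * deriv (fun y' => W y' s) y =
          -(3 / 4) * βstar * βτ * Real.exp (-s / 2) * B y s -
            Real.exp (-s / 2) * βτ * deriv κ t) ∧
      (deriv (fun s' => Z y s') s +
          ((3 / 2) * y + (1 / 3) * βτ * W y s + GZ) * deriv (fun y' => Z y' s) y =
          -(3 / 4) * βstar * βτ * Real.exp (-s) * B y s)) := by
  have hσ : ∀ t ∈ I, HasDerivAt (fun t => -Real.log (τ t - t))
      ((1 - deriv τ t) * Real.exp (-Real.log (τ t - t))) t := by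
    intro t ht
    have hpos : 0 < τ t - t := by linarith [hτgt t ht]
    have h := ((((hτdiff t ht).hasDerivAt).sub (hasDerivAt_id t)).log hpos.ne').neg
    refine h.congr_deriv ?_
    rw [Real.exp_neg, Real.exp_log hpos]
    simp only [Pi.sub_apply, id]
    field_simp
    ring
  have hσpos : ∀ t ∈ I, 0 < (1 - deriv τ t) * Real.exp (-Real.log (τ t - t)) := fun t ht =>
    mul_pos (by linarith [hτ' t ht]) (Real.exp_pos _)
  have hcont : ContinuousOn (fun t => -Real.log (τ t - t)) I := fun t ht =>
    (hσ t ht).continuousAt.continuousWithinAt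
  have hmono : StrictMonoOn (fun t => -Real.log (τ t - t)) I := by
    refine strictMonoOn_of_deriv_pos hIconn.convex hcont ?_
    intro t ht
    have ht := interior_subset ht
    rw [(hσ t ht).deriv]
    exact hσpos t ht
  refine ⟨hmono, ?_⟩
  intro y t ht s βτ GW GZ
  obtain ⟨g, hg0, hgd, hgev⟩ := local_inverse_aux I hIopen _ hmono t _ ht hcont (hσ t ht)
    (hσpos t ht).ne'
  change g s = t at hg0
  change HasDerivAt g ((1 - deriv τ t) * Real.exp s)⁻¹ s at hgd
  have hβ : 1 - deriv τ t ≠ 0 := by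
    have := hτ' t ht
    intro h
    linarith
  -- space location
  have hexp : HasDerivAt (fun r : ℝ => Real.exp (-(3 * r) / 2))
      (Real.exp (-(3 * s) / 2) * (-(3 / 2))) s := by
    have h : HasDerivAt (fun r : ℝ => -(3 * r) / 2) (-(3 / 2)) s :=
      ((((hasDerivAt_id s).const_mul 3).neg).div_const 2).congr_deriv (by norm_num)
    exact h.exp
  have hexp2 : HasDerivAt (fun r : ℝ => Real.exp (r / 2)) (Real.exp (s / 2) * (1 / 2)) s :=
    ((hasDerivAt_id s).div_const 2).exp
  have hξg : HasDerivAt (fun r => ξ (g r)) (deriv ξ t * ((1 - deriv τ t) * Real.exp s)⁻¹) s := by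
    have h : HasDerivAt ξ (deriv ξ t) (g s) := by rw [hg0]; exact (hξdiff t ht).hasDerivAt
    exact h.comp s hgd
  have hκg : HasDerivAt (fun r => κ (g r)) (deriv κ t * ((1 - deriv τ t) * Real.exp s)⁻¹) s := by
    have h : HasDerivAt κ (deriv κ t) (g s) := by rw [hg0]; exact (hκdiff t ht).hasDerivAt
    exact h.comp s hgd
  have hp := hξg.add (hexp.const_mul y)
  obtain ⟨x, hx⟩ : ∃ x, x = ξ t + y * Real.exp (-(3 * s) / 2) := ⟨_, rfl⟩
  have hpx : ((fun r => ξ (g r)) + fun r => y * Real.exp (-(3 * r) / 2)) s = x := by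
    simp only [Pi.add_apply, hg0, hx]
  have hws := chain_aux w _ g _ _ s x t hpx hg0 (hwdiff x t ht) hp hgd
  have hzs := chain_aux z _ g _ _ s x t hpx hg0 (hzdiff x t ht) hp hgd
  have hq : HasDerivAt (fun r : ℝ => ξ t + r * Real.exp (-(3 * s) / 2))
      (Real.exp (-(3 * s) / 2)) y :=
    (((hasDerivAt_id y).mul_const _).const_add (ξ t)).congr_deriv (by simp)
  have hwy := chain_aux w _ (fun _ => t) _ _ y x t hx.symm rfl (hwdiff x t ht) hq
    (hasDerivAt_const y t)
  have hzy := chain_aux z _ (fun _ => t) _ _ y x t hx.symm rfl (hzdiff x t ht) hq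
    (hasDerivAt_const y t)
  have hWs := (hexp2.mul (hws.sub hκg)).congr_of_eventuallyEq (f₁ := fun s' => W y s') (by
    filter_upwards [hgev] with r hr
    have h := hW y (g r) hr.1
    have h2 : -Real.log (τ (g r) - g r) = r := hr.2
    rw [h2] at h
    exact h)
  have hZs := hzs.congr_of_eventuallyEq (f₁ := fun s' => Z y s') (by
    filter_upwards [hgev] with r hr
    have h := hZ y (g r) hr.1
    have h2 : -Real.log (τ (g r) - g r) = r := hr.2
    rw [h2] at h
    exact h)
  have hWy := ((hwy.sub_const (κ t)).const_mul (Real.exp (s / 2))).congr_of_eventuallyEq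
    (f₁ := fun y' => W y' s) (Eventually.of_forall fun r => hW r t ht)
  have hZy := hzy.congr_of_eventuallyEq
    (f₁ := fun y' => Z y' s) (Eventually.of_forall fun r => hZ r t ht)
  have eW : W y s = Real.exp (s / 2) * (w (x, t) - κ t) := by rw [hx]; exact hW y t ht
  have eZ : Z y s = z (x, t) := by rw [hx]; exact hZ y t ht
  have eB : B y s = deriv b x := by rw [hx]; exact hB y t ht
  have e1 := hweq x t ht
  have e2 := hzeq x t ht
  rw [hWs.deriv, hZs.deriv, hWy.deriv, hZy.deriv]
  simp only [GW, GZ, βτ, eW, eZ, eB, Pi.sub_apply, hg0, hpx]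
  have w_t := eq_sub_of_add_eq e1
  have z_t := eq_sub_of_add_eq e2
  rw [w_t, z_t]
  have E1 : Real.exp s = Real.exp (s / 2) ^ 2 := by
    rw [← Real.exp_nat_mul]; congr 1; push_cast; ring
  have E2 : Real.exp (-(3 * s) / 2) = (Real.exp (s / 2) ^ 3)⁻¹ := by
    rw [← Real.exp_nat_mul, ← Real.exp_neg]; congr 1; push_cast; ring
  have E3 : Real.exp (-s / 2) = (Real.exp (s / 2))⁻¹ := by
    rw [← Real.exp_neg]; congr 1; ring
  have E4 : Real.exp (-s) = (Real.exp (s / 2) ^ 2)⁻¹ := by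
    rw [Real.exp_neg, E1]
  rw [E1, E2, E3, E4]
  have hE : Real.exp (s / 2) ≠ 0 := (Real.exp_pos _).ne'
  generalize Real.exp (s / 2) = E at hE ⊢
  generalize 1 - deriv τ t = q at hβ ⊢
  constructor
  · field_simp
    ring
  · field_simp
    ring
end

section
/- Let 0 < ℓ ≤ e^{−3/2}, let s₀ ≤ s₁ be real numbers, and let Φ : [s₀, s₁] → ℝ be a function satisfying |Φ(s)| ≥ ℓ·e^{(s − s₀)/5} for all s ∈ [s₀, s₁]. Then ∫_{s₀}^{s₁} (1 + Φ(s)²)^{−1/3} ds ≤ 10·log(1/ℓ). -/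
/-- Integral bound along a receding trajectory (second part of Lemma 7.2 abstracted):
if `0 < ℓ ≤ e^{−3/2}` and `|Φ(s)| ≥ ℓ e^{(s − s₀)/5}` on `[s₀, s₁]`, then
`∫_{s₀}^{s₁} ⟨Φ(s)⟩^{−2/3} ds ≤ 10 log(1/ℓ)`. -/
theorem trajectory_integral_bound (ℓ s₀ s₁ : ℝ) (hℓpos : 0 < ℓ)
    (hℓ : ℓ ≤ Real.exp (-(3 : ℝ) / 2)) (hs : s₀ ≤ s₁) (Φ : ℝ → ℝ)
    (hΦ : ∀ s ∈ Set.Icc s₀ s₁, ℓ * Real.exp ((s - s₀) / 5) ≤ |Φ s|) :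
    ∫ s in s₀..s₁, (1 + Φ s ^ 2) ^ (-(1 : ℝ) / 3) ≤ 10 * Real.log (1 / ℓ) := by
  set L := Real.log (1 / ℓ) with hL
  have hlog : Real.log ℓ = -L := by rw [hL, one_div, Real.log_inv]; ring
  have hL1 : 3 / 2 ≤ L := by
    have h := Real.log_le_log hℓpos hℓ
    rw [Real.log_exp, hlog] at h
    linarith
  have hℓe : ℓ = Real.exp (-L) := by rw [← hlog, Real.exp_log hℓpos]
  by_cases hi : IntervalIntegrable (fun s => (1 + Φ s ^ 2) ^ (-(1 : ℝ) / 3))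
      MeasureTheory.volume s₀ s₁
  swap
  · rw [intervalIntegral.integral_undef hi]; linarith
  set m := s₀ + 5 * L with hm
  let e : ℝ → ℝ := fun s => Real.exp (-(2 / 15) * (s - m))
  have hec : Continuous e := by fun_prop
  let g : ℝ → ℝ := fun s => min 1 (e s)
  have hgc : Continuous g := continuous_const.min hec
  have hg1 : ∀ s ∈ Set.Icc s₀ s₁, (1 + Φ s ^ 2) ^ (-(1 : ℝ) / 3) ≤ g s := by
    intro s hsm
    refine le_min ?_ ?_
    · exact Real.rpow_le_one_of_one_le_of_nonpos (by nlinarith [sq_nonneg (Φ s)]) (by norm_num)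
    · have h1 := hΦ s hsm
      rw [hℓe, ← Real.exp_add] at h1
      have h2 : Real.exp (-L + (s - s₀) / 5) ^ 2 ≤ Φ s ^ 2 := by
        rw [← sq_abs (Φ s)]
        exact pow_le_pow_left₀ (Real.exp_pos _).le h1 2
      have h3 : Real.exp (-L + (s - s₀) / 5) ^ 2 ≤ 1 + Φ s ^ 2 := by linarith
      have h4 := Real.rpow_le_rpow_of_nonpos (by positivity) h3
        (show (-(1 : ℝ) / 3) ≤ 0 by norm_num)
      refine h4.trans (le_of_eq ?_)
      rw [← Real.exp_nat_mul, ← Real.exp_mul]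
      show _ = Real.exp _
      congr 1
      rw [hm]; push_cast; ring
  have hb1 : ∀ b, s₀ ≤ b → ∫ s in s₀..b, g s ≤ b - s₀ := by
    intro b hb
    have := intervalIntegral.integral_mono_on hb (hgc.intervalIntegrable _ _)
      (continuous_const.intervalIntegrable (μ := MeasureTheory.volume) _ _)
      (fun s _ => (min_le_left 1 (e s) : g s ≤ (1 : ℝ)))
    simpa using this
  have hmain := intervalIntegral.integral_mono_on hs hi (hgc.intervalIntegrable _ _) hg1
  refine hmain.trans ?_
  rcases le_total s₁ m with h | h
  · have := hb1 s₁ hs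
    linarith
  · rw [← intervalIntegral.integral_add_adjacent_intervals
      (hgc.intervalIntegrable s₀ m) (hgc.intervalIntegrable m s₁)]
    have h1 := hb1 m (by linarith)
    have h2 := intervalIntegral.integral_mono_on (μ := MeasureTheory.volume) h (hgc.intervalIntegrable _ _)
      (hec.intervalIntegrable _ _) (fun s _ => (min_le_right 1 (e s) : g s ≤ e s))
    have h3 : ∫ s in m..s₁, e s = (-(15 / 2)) * e s₁ - (-(15 / 2)) * e m := by
      refine intervalIntegral.integral_eq_sub_of_hasDerivAt (f := fun s => (-(15 / 2)) * e s)
        (fun x _ => ?_) (hec.intervalIntegrable _ _)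
      have hd := ((((hasDerivAt_id x).sub_const m).const_mul (-(2 / 15 : ℝ))).exp).const_mul
        (-(15 / 2 : ℝ))
      refine hd.congr_deriv ?_
      simp only [e, id]
      ring
    have h4 : e m = 1 := by simp [e]
    have h5 : 0 < e s₁ := Real.exp_pos _
    rw [h3, h4] at h2
    linarith
end
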